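/- arXiv:1903.03834 — 2 statements merged into one kernel-verified Lean document; each statement's English description precedes it below -/
import Mathlib

section
/- Suppose b > 0 and (n−1)(1−β) − 2mβ < 0 (this forces β ∈ (−1,0)). Then for each z ∈ (0, 𝔷_c) there exists a unique point ξ(z) ∈ (𝔷_c, ∞) such that J(ξ(z);z) = 0, and J(x;z) < 0 for all x ∈ (z, ξ(z)) while J(x;z) > 0 for all x > ξ(z). The function ξ is strictly decreasing on (0, 𝔷_c), takes values in (𝔷_c, 𝔷_0), and satisfies lim_{z↓0} ξ(z) = 𝔷_0, ξ(z_⊖) = α(z_⊖) and lim_{z↑𝔷_c} ξ(z) = 𝔷_c, where α(z) denotes the unique zero of F(·;z) in (𝔷_c, 𝔷_0) for z ∈ (0, 𝔠·𝔷_c), and z_⊖ ∈ (K, 𝔠·𝔷_c) is the unique point at which z ↦ (α(z) − K)/ψ(α(z);z) − (z − K)/z^n changes sign from positive to negative on (0, 𝔠·𝔷_c). -/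
/-!
Write `J / A = Q_c - const` with `c = z^{n-m}`, where `Q_c = h + c g` is a pencil of functions not
depending on `z`. Since `𝔷_c = -mnK / ((n-1)(1-m))`, one has
`Q_c'(x) = (n-1)(1-m)(x - 𝔷_c) x^{-n-1} (x^{n-m} - c)` (`qAux_hasDerivAt`), and `J(z;z) = 0`, so
`J(x;z) / A = Q_c(x) - Q_c(z)`. Hence `J(·;z)` falls from `0` on `[z, 𝔷_c]` and increases
afterwards; it is positive at `𝔷_0` by Bernoulli's inequality (`jAux_zzero_pos`). This gives `ξ(z)`,
its uniqueness and the signs of `J`. The map `ξ` is strictly decreasing because `J(ξ(z₁);z₂) > 0`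
for `z₁ < z₂` (`jAux_pos_of_lt`). The two limits follow from continuity of `J` in `z`,
together with `J(x;0) / A = h(x) < 0` for `x < 𝔷_0` and `J(x;𝔷_c) > 0` for `x > 𝔷_c`.

For the value at `z_⊖`: the zeros of `F(·;z)` are the zeros of `Q_c` with `c = κ z^{n-m}`, and at
such a zero `J(x;z)` has the sign of `(x - K) / ψ(x;z) - (z - K) / z^n` (`exists_jAux_eq_mul`). As
that difference changes sign at `z_⊖`, continuity forces `J(α(z_⊖);z_⊖) = 0`
(`jAux_alpha_eq_zero`).
-/

open Set Filter Topology

noncomputable section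

/-- The coefficient `A`. -/
def Acoef (n m beta : ℝ) : ℝ := (n * (1 - beta) - m * (1 + beta)) / ((n - m) * (1 + beta))

/-- The coefficient `B(z)`. -/
def Bcoef (n m beta z : ℝ) : ℝ := 2 * n * beta * z ^ (n - m) / ((n - m) * (1 + beta))

/-- The minimal excessive function `ψ(·;z)` of the skew geometric Brownian motion. -/
def psi (n m beta z x : ℝ) : ℝ :=
  if x ≤ z then x ^ n else Acoef n m beta * x ^ n + Bcoef n m beta z * x ^ m

/-- The function `F(·;z)`. -/
def Ffun (n m beta K z x : ℝ) : ℝ :=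
  ((n - 1) * x - n * K) * Acoef n m beta * x ^ (n - m)
    + ((m - 1) * x - m * K) * Bcoef n m beta z

/-- The critical point `𝔷_c = rK/(r-b)`. -/
def zcrit (r b K : ℝ) : ℝ := r * K / (r - b)

/-- The critical point `𝔷_0 = nK/(n-1)`. -/
def zzero (n K : ℝ) : ℝ := n * K / (n - 1)

/-- The critical point `𝔷_β = nK/(n - (1+β)/(1-β))`. -/
def zbeta (n K beta : ℝ) : ℝ := n * K / (n - (1 + beta) / (1 - beta))

/-- The constant `𝔠`. -/
def gothC (n m beta : ℝ) : ℝ :=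
  (-((n - 1) * (n * (1 - beta) - m * (1 + beta))) / (2 * m * (m - 1) * beta)) ^ ((1 : ℝ) / (n - m))

/-- The function `J(·;z)`. -/
def Jfun (n m beta K z x : ℝ) : ℝ :=
  ((n - 1) * x - n * K) * Acoef n m beta * x ^ (-m)
    - ((m - 1) * x - m * K) * Acoef n m beta * z ^ (n - m) * x ^ (-n)
    - (n - m) * Acoef n m beta * (z - K) * z ^ (-m)

/-- The function `G(·,·;z)`. -/
def Gfun (n m K z x y : ℝ) : ℝ :=
  ((n - 1) * y - n * K) * z ^ m * y ^ (-m) - ((m - 1) * y - m * K) * z ^ n * y ^ (-n)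
    - ((n - 1) * x - n * K) * z ^ m * x ^ (-m) + ((m - 1) * x - m * K) * z ^ n * x ^ (-n)

/-- The function `H(·,·;z)`. -/
def Hfun (n m beta K z x y : ℝ) : ℝ :=
  y ^ (-n) * Ffun n m beta K z y
    - (1 - beta) / (1 + beta) * (((n - 1) * x - n * K) * x ^ (-m))

/-! ### The pencil `h + c g` and its derivative -/

/-- The part `((n-1)x - nK) x^{-m}` of `J / A` that does not involve `z`. -/
def hAux (n m K x : ℝ) : ℝ := ((n - 1) * x - n * K) * x ^ (-m)

/-- The factor of `z^{n-m}` in `J / A`. -/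
def gAux (n m K x : ℝ) : ℝ := ((1 - m) * x + m * K) * x ^ (-n)

/-- The pencil `Q_c = h + c g`; both `J(·;z) / A` (up to an additive constant) and `F(·;z)` (up to a positive
factor) belong to it. -/
def qAux (n m K c x : ℝ) : ℝ := hAux n m K x + c * gAux n m K x

/-- The quotient `J / A`. -/
def jAux (n m K z x : ℝ) : ℝ :=
  qAux n m K (z ^ (n - m)) x - (n - m) * (z - K) * z ^ (-m)

lemma Jfun_eq (n m beta K z x : ℝ) :
    Jfun n m beta K z x = Acoef n m beta * jAux n m K z x := by
  unfold Jfun jAux qAux hAux gAux; ring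

lemma qAux_diag {n m K z : ℝ} (hz : 0 < z) :
    qAux n m K (z ^ (n - m)) z = (n - m) * (z - K) * z ^ (-m) := by
  have h : z ^ (n - m) * z ^ (-n) = z ^ (-m) := by
    rw [← Real.rpow_add hz]; congr 1; ring
  unfold qAux hAux gAux
  linear_combination ((1 - m) * z + m * K) * h

lemma jAux_eq {n m K z : ℝ} (hz : 0 < z) (x : ℝ) :
    jAux n m K z x = qAux n m K (z ^ (n - m)) x - qAux n m K (z ^ (n - m)) z := by
  rw [qAux_diag hz]; rfl

/-- The derivative of every member of the pencil carries the factor `x - 𝔷_c`. -/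
lemma qAux_hasDerivAt {n m K zc c x : ℝ} (hx : 0 < x)
    (hzc : (n - 1) * (1 - m) * zc = -m * n * K) :
    HasDerivAt (qAux n m K c)
      ((n - 1) * (1 - m) * (x - zc) * (x ^ (-n - 1) * (x ^ (n - m) - c))) x := by
  have e1 := Real.hasDerivAt_rpow_const (x := x) (p := -m) (Or.inl hx.ne')
  have e2 := Real.hasDerivAt_rpow_const (x := x) (p := -n) (Or.inl hx.ne')
  have l1 : HasDerivAt (fun x : ℝ => (n - 1) * x - n * K) (n - 1) x := by
    simpa using ((hasDerivAt_id x).const_mul (n - 1)).sub_const (n * K)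
  have l2 : HasDerivAt (fun x : ℝ => (1 - m) * x + m * K) (1 - m) x := by
    simpa using ((hasDerivAt_id x).const_mul (1 - m)).add_const (m * K)
  have h := (l1.mul e1).add ((l2.mul e2).const_mul c)
  have r1 : x ^ (-m) = x * x ^ (-m - 1) := by
    rw [Real.rpow_sub_one hx.ne']; field_simp
  have r2 : x ^ (-n) = x * x ^ (-n - 1) := by
    rw [Real.rpow_sub_one hx.ne']; field_simp
  have r3 : x ^ (-n - 1) * x ^ (n - m) = x ^ (-m - 1) := by
    rw [← Real.rpow_add hx]; congr 1; ring
  refine HasDerivAt.congr_deriv h ?_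
  rw [mul_sub (x ^ (-n - 1)), r3, r1, r2]
  linear_combination (x ^ (-m - 1) - c * x ^ (-n - 1)) * hzc

lemma qAux_continuousOn {n m K zc c : ℝ} {s : Set ℝ} (hs : ∀ x ∈ s, 0 < x)
    (hzc : (n - 1) * (1 - m) * zc = -m * n * K) : ContinuousOn (qAux n m K c) s :=
  fun _ hx => (qAux_hasDerivAt (hs _ hx) hzc).continuousAt.continuousWithinAt

/-! ### Monotonicity of the pencil and sign of `J` -/

section Pencil

variable {n m K zc : ℝ}

lemma qAux_strictMonoOn {c : ℝ} (hn : 1 < n) (hm : m < 0) (hzc0 : 0 < zc)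
    (hzc : (n - 1) * (1 - m) * zc = -m * n * K) (hc : c ≤ zc ^ (n - m)) :
    StrictMonoOn (qAux n m K c) (Ici zc) := by
  refine strictMonoOn_of_deriv_pos (convex_Ici _)
    (qAux_continuousOn (fun x hx => hzc0.trans_le hx) hzc) fun x hx => ?_
  rw [interior_Ici, mem_Ioi] at hx
  have hx0 : 0 < x := hzc0.trans hx
  rw [(qAux_hasDerivAt hx0 hzc).deriv]
  have h1 : zc ^ (n - m) < x ^ (n - m) := Real.rpow_lt_rpow hzc0.le hx (by linarith)
  have h2 : 0 < x ^ (n - m) - c := by linarith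
  have h3 : 0 < n - 1 := by linarith
  have h4 : 0 < 1 - m := by linarith
  have h5 : 0 < x - zc := by linarith
  positivity

lemma qAux_strictMonoOn_left (hn : 1 < n) (hm : m < 0)
    (hzc : (n - 1) * (1 - m) * zc = -m * n * K) :
    StrictMonoOn (qAux n m K (zc ^ (n - m))) (Ioc 0 zc) := by
  refine strictMonoOn_of_deriv_pos (convex_Ioc _ _)
    (qAux_continuousOn (fun x hx => hx.1) hzc) fun x hx => ?_
  rw [interior_Ioc, mem_Ioo] at hx
  rw [(qAux_hasDerivAt hx.1 hzc).deriv]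
  have h1 : x ^ (n - m) < zc ^ (n - m) := Real.rpow_lt_rpow hx.1.le hx.2 (by linarith)
  have h2 : 0 < zc ^ (n - m) - x ^ (n - m) := by linarith
  have h3 : 0 < n - 1 := by linarith
  have h4 : 0 < 1 - m := by linarith
  have h5 : 0 < zc - x := by linarith
  have hx0 := hx.1
  have : 0 < (n - 1) * (1 - m) * (zc - x) * (x ^ (-n - 1) * (zc ^ (n - m) - x ^ (n - m))) := by
    positivity
  linarith

lemma qAux_strictAntiOn {z : ℝ} (hn : 1 < n) (hm : m < 0) (hz : 0 < z)
    (hzc : (n - 1) * (1 - m) * zc = -m * n * K) :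
    StrictAntiOn (qAux n m K (z ^ (n - m))) (Icc z zc) := by
  refine strictAntiOn_of_deriv_neg (convex_Icc _ _)
    (qAux_continuousOn (fun x hx => hz.trans_le hx.1) hzc) fun x hx => ?_
  rw [interior_Icc, mem_Ioo] at hx
  have hx0 : 0 < x := hz.trans hx.1
  rw [(qAux_hasDerivAt hx0 hzc).deriv]
  have h1 : z ^ (n - m) < x ^ (n - m) := Real.rpow_lt_rpow hz.le hx.1 (by linarith)
  have h2 : 0 < x ^ (n - m) - z ^ (n - m) := by linarith
  have h3 : 0 < n - 1 := by linarith
  have h4 : 0 < 1 - m := by linarith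
  have h5 : 0 < zc - x := by linarith
  have : 0 < (n - 1) * (1 - m) * (zc - x) * (x ^ (-n - 1) * (x ^ (n - m) - z ^ (n - m))) := by
    positivity
  linarith

lemma jAux_neg {z x : ℝ} (hn : 1 < n) (hm : m < 0) (hz : 0 < z)
    (hzc : (n - 1) * (1 - m) * zc = -m * n * K) (hzx : z < x) (hx : x ≤ zc) :
    jAux n m K z x < 0 := by
  rw [jAux_eq hz]
  have := qAux_strictAntiOn (zc := zc) hn hm hz hzc ⟨le_rfl, hzx.le.trans hx⟩ ⟨hzx.le, hx⟩ hzx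
  linarith

lemma jAux_strictMonoOn {z : ℝ} (hn : 1 < n) (hm : m < 0) (hz : 0 < z) (hzz : z ≤ zc)
    (hzc : (n - 1) * (1 - m) * zc = -m * n * K) :
    StrictMonoOn (jAux n m K z) (Ici zc) := by
  intro x hx y hy hxy
  have := qAux_strictMonoOn hn hm (hz.trans_le hzz) hzc
    (Real.rpow_le_rpow hz.le hzz (by linarith : 0 ≤ n - m)) hx hy hxy
  unfold jAux; linarith

/-- Since `h(𝔷_0) = 0`, positivity of `J(𝔷_0;z)` says that `𝔷_0` is the strict maximizer of
`x ↦ (x - K) / x^n`, which is Bernoulli's inequality at `z / 𝔷_0`. -/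
lemma jAux_zzero_pos {z : ℝ} (hn : 1 < n) (hm : m < 0) (hK : 0 < K) (hz : 0 < z)
    (hzz : z < zzero n K) : 0 < jAux n m K z (zzero n K) := by
  have hn1 : 0 < n - 1 := by linarith
  have hZ : 0 < zzero n K := by unfold zzero; positivity
  have hZe : (n - 1) * zzero n K = n * K := by unfold zzero; field_simp
  have bern := one_add_mul_self_lt_rpow_one_add (s := z / zzero n K - 1) (p := n)
    (by have : 0 < z / zzero n K := by positivity
        linarith)
    (by have : z / zzero n K < 1 := (div_lt_one hZ).2 hzz
        linarith) hn
  have e0 : 1 + (z / zzero n K - 1) = z / zzero n K := by ring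
  rw [e0, Real.div_rpow hz.le hZ.le] at bern
  have e1 : z / zzero n K * (n * K) = (n - 1) * z := by
    rw [← hZe]; field_simp
  have key : z - K < K / (n - 1) * (z ^ n / zzero n K ^ n) := by
    have h2 : 0 < K / (n - 1) := by positivity
    have h3 := mul_lt_mul_of_pos_left bern h2
    have h4 : K / (n - 1) * (1 + n * (z / zzero n K - 1)) = z - K := by
      generalize z / zzero n K = u at e1
      field_simp
      linear_combination e1
    linarith
  have e2 : z ^ (n - m) = z ^ n * z ^ (-m) := by
    rw [← Real.rpow_add hz]; congr 1
  have e3 : (1 - m) * zzero n K + m * K = (n - m) * (K / (n - 1)) := by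
    unfold zzero; field_simp; ring
  have e4 : jAux n m K z (zzero n K)
      = (n - m) * z ^ (-m) * (K / (n - 1) * (z ^ n / zzero n K ^ n) - (z - K)) := by
    unfold jAux qAux hAux gAux
    rw [e3, hZe, e2, Real.rpow_neg hZ.le n]
    ring
  rw [e4]
  have h5 : 0 < n - m := by linarith
  have h6 : 0 < K / (n - 1) * (z ^ n / zzero n K ^ n) - (z - K) := by linarith
  positivity

lemma exists_jAux_zero {z : ℝ} (hn : 1 < n) (hm : m < 0) (hK : 0 < K) (hz : 0 < z) (hzz : z < zc)
    (hzc : (n - 1) * (1 - m) * zc = -m * n * K) (hzc0 : zc < zzero n K) :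
    ∃ x ∈ Ioo zc (zzero n K), jAux n m K z x = 0 := by
  have hc : ContinuousOn (jAux n m K z) (Icc zc (zzero n K)) :=
    (qAux_continuousOn (fun x hx => (hz.trans hzz).trans_le hx.1) hzc).sub continuousOn_const
  obtain ⟨x, hx, h0⟩ := intermediate_value_Ioo hzc0.le hc
    ⟨jAux_neg hn hm hz hzc hzz le_rfl, jAux_zzero_pos hn hm hK hz (hzz.trans hzc0)⟩
  exact ⟨x, hx, h0⟩

/-- Raising `z` makes `J(x;z)` positive at a zero `x`. Everything is a comparison between members of
the pencil: with `c = 𝔷_c^{n-m}` if `g x ≤ g z₂`, and with `c = z₁^{n-m}` otherwise. -/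
lemma jAux_pos_of_lt {z₁ z₂ x : ℝ} (hn : 1 < n) (hm : m < 0) (hz₁ : 0 < z₁) (h12 : z₁ < z₂)
    (h2 : z₂ ≤ zc) (hzc : (n - 1) * (1 - m) * zc = -m * n * K) (hx : zc < x)
    (h0 : jAux n m K z₁ x = 0) : 0 < jAux n m K z₂ x := by
  have hz₂ := hz₁.trans h12
  have hp : 0 < n - m := by linarith
  rcases le_or_gt (gAux n m K x) (gAux n m K z₂) with hg | hg
  · have a1 := (qAux_strictMonoOn_left hn hm hzc).monotoneOn ⟨hz₂, h2⟩
      ⟨hz₂.trans_le h2, le_rfl⟩ h2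
    have a2 := qAux_strictMonoOn hn hm (hz₂.trans_le h2) hzc le_rfl self_mem_Ici hx.le hx
    have a3 := mul_nonneg
      (sub_nonneg.2 (Real.rpow_le_rpow hz₂.le h2 hp.le)) (sub_nonneg.2 hg)
    rw [jAux_eq hz₂]
    unfold qAux at *
    linarith
  · have a1 := jAux_neg hn hm hz₁ hzc h12 h2
    have a2 := mul_pos (sub_pos.2 (Real.rpow_lt_rpow hz₁.le h12 hp)) (sub_pos.2 hg)
    rw [jAux_eq hz₁] at a1 h0
    rw [jAux_eq hz₂]
    unfold qAux at *
    linarith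

lemma jAux_continuousAt {z x : ℝ} (hn : 1 < n) (hm : m < 0) (hx : 0 < x) :
    ContinuousAt (fun q : ℝ × ℝ => jAux n m K q.1 q.2) (z, x) := by
  unfold jAux qAux hAux gAux
  have c1 : ContinuousAt (fun q : ℝ × ℝ => q.1 ^ (n - m)) (z, x) :=
    continuousAt_fst.rpow_const (Or.inr (by linarith))
  have c2 : ContinuousAt (fun q : ℝ × ℝ => q.1 ^ (-m)) (z, x) :=
    continuousAt_fst.rpow_const (Or.inr (by linarith))
  have c3 : ContinuousAt (fun q : ℝ × ℝ => q.2 ^ (-m)) (z, x) :=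
    continuousAt_snd.rpow_const (Or.inl hx.ne')
  have c4 : ContinuousAt (fun q : ℝ × ℝ => q.2 ^ (-n)) (z, x) :=
    continuousAt_snd.rpow_const (Or.inl hx.ne')
  fun_prop

end Pencil

/-! ### Zeros of `F` and the payoff ratios -/

/-- The constant `(A - 1) / A`, positive for `β < 0`: the zeros of `F(·;z)` are those of the member
`c = κ z^{n-m}` of the pencil. -/
def kap (n m beta : ℝ) : ℝ := -(2 * n * beta) / (n * (1 - beta) - m * (1 + beta))

section Skew

variable {n m beta K : ℝ}

lemma Acoef_pos (hn : 1 < n) (hm : m < 0) (hb1 : -1 < beta) (hb2 : beta < 1) :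
    0 < Acoef n m beta := by
  have h1 : 0 < n * (1 - beta) := mul_pos (by linarith) (by linarith)
  have h2 : 0 < -m * (1 + beta) := mul_pos (by linarith) (by linarith)
  have h3 : 0 < (n - m) * (1 + beta) := mul_pos (by linarith) (by linarith)
  exact div_pos (by linarith) h3

lemma Bcoef_eq (hn : 1 < n) (hm : m < 0) (hb1 : -1 < beta) (hb2 : beta < 1) (z : ℝ) :
    Bcoef n m beta z = -(Acoef n m beta * kap n m beta * z ^ (n - m)) ∧
    Bcoef n m beta z = (1 - Acoef n m beta) * z ^ (n - m) := by
  have h1 : 0 < n * (1 - beta) := mul_pos (by linarith) (by linarith)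
  have h2 : 0 < -m * (1 + beta) := mul_pos (by linarith) (by linarith)
  have h0 : n * (1 - beta) - m * (1 + beta) ≠ 0 := by linarith
  have h3 : n - m ≠ 0 := by linarith
  have h4 : 1 + beta ≠ 0 := by linarith
  unfold Bcoef Acoef kap
  constructor
  · field_simp
  · field_simp; ring

lemma Ffun_eq {z x : ℝ} (hn : 1 < n) (hm : m < 0) (hb1 : -1 < beta) (hb2 : beta < 1)
    (hx : 0 < x) :
    Ffun n m beta K z x
      = Acoef n m beta * x ^ n * qAux n m K (kap n m beta * z ^ (n - m)) x := by
  have e1 : x ^ (n - m) = x ^ n * x ^ (-m) := by rw [← Real.rpow_add hx]; congr 1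
  have e2 : x ^ n * x ^ (-n) = 1 := by rw [← Real.rpow_add hx]; simp
  unfold Ffun qAux hAux gAux
  rw [(Bcoef_eq hn hm hb1 hb2 z).1, e1]
  linear_combination (-(Acoef n m beta * kap n m beta * z ^ (n - m)) * ((1 - m) * x + m * K)) * e2

/-- At a zero `x` of `F(·;z)`, the sign of `J(x;z)` is the sign of
`(x - K) / ψ(x;z) - (z - K) / z^n`. -/
lemma exists_jAux_eq_mul {z x : ℝ} (hn : 1 < n) (hm : m < 0) (hb1 : -1 < beta) (hb2 : beta < 1)
    (hz : 0 < z) (hzx : z < x) (hKx : K < x) (hg : 0 < gAux n m K x)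
    (hF : Ffun n m beta K z x = 0) :
    ∃ t : ℝ, 0 < t ∧
      jAux n m K z x = t * ((x - K) / psi n m beta z x - (z - K) / z ^ n) := by
  have hx := hz.trans hzx
  have hA := Acoef_pos hn hm hb1 hb2
  have hpsi : psi n m beta z x
      = Acoef n m beta * x ^ n + (1 - Acoef n m beta) * z ^ (n - m) * x ^ m := by
    unfold psi; rw [if_neg (not_le.2 hzx), (Bcoef_eq hn hm hb1 hb2 z).2]
  have hxn : 0 < x ^ n := by positivity
  have hzn : 0 < z ^ n := by positivity
  have hzm : 0 < z ^ (-m) := by positivity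
  have hnm : 0 < n - m := by linarith
  have hxK : 0 < x - K := by linarith
  have hq : qAux n m K (kap n m beta * z ^ (n - m)) x = 0 := by
    rw [Ffun_eq hn hm hb1 hb2 hx] at hF
    rcases mul_eq_zero.1 hF with h | h
    · exact absurd h (by positivity)
    · exact h
  have hAk : Acoef n m beta * kap n m beta * z ^ (n - m)
      = -((1 - Acoef n m beta) * z ^ (n - m)) := by
    have := Bcoef_eq hn hm hb1 hb2 z
    linarith [this.1, this.2]
  have hAh : Acoef n m beta * hAux n m K x
      = (1 - Acoef n m beta) * z ^ (n - m) * gAux n m K x := by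
    unfold qAux at hq
    linear_combination Acoef n m beta * hq - gAux n m K x * hAk
  have e1 : x ^ n * gAux n m K x = (1 - m) * x + m * K := by
    have e : x ^ n * x ^ (-n) = 1 := by rw [← Real.rpow_add hx]; simp
    unfold gAux; linear_combination ((1 - m) * x + m * K) * e
  have e2 : x ^ m * hAux n m K x = (n - 1) * x - n * K := by
    have e : x ^ m * x ^ (-m) = 1 := by rw [← Real.rpow_add hx]; simp
    unfold hAux; linear_combination ((n - 1) * x - n * K) * e
  have hpg : psi n m beta z x * gAux n m K x = Acoef n m beta * (n - m) * (x - K) := by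
    rw [hpsi]
    linear_combination Acoef n m beta * e1 - x ^ m * hAh + Acoef n m beta * e2
  have hpp : 0 < psi n m beta z x := by
    have : 0 < psi n m beta z x * gAux n m K x := by rw [hpg]; positivity
    exact pos_of_mul_pos_left this hg.le
  have e3 : z ^ (n - m) = z ^ n * z ^ (-m) := by rw [← Real.rpow_add hz]; congr 1
  refine ⟨z ^ (-m) * (gAux n m K x * psi n m beta z x * z ^ n)
    / (Acoef n m beta * (x - K)), by positivity, ?_⟩
  have hAj : Acoef n m beta * jAux n m K z x
      = z ^ (-m) * (z ^ n * gAux n m K x - Acoef n m beta * (n - m) * (z - K)) := by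
    unfold jAux qAux
    rw [e3] at hAh ⊢
    linear_combination hAh
  have hfin : Acoef n m beta * (x - K) * jAux n m K z x
      = z ^ (-m) * gAux n m K x * ((x - K) * z ^ n - (z - K) * psi n m beta z x) := by
    linear_combination (x - K) * hAj + z ^ (-m) * (z - K) * hpg
  field_simp
  linear_combination hfin

end Skew

/-! ### The zeros of `F` and `J` at `z_⊖` -/

set_option maxHeartbeats 1000000 in
/-- At the point `z_⊖` where the difference of the two payoff ratios changes sign, the zero of
`F(·;z_⊖)` is also a zero of `J(·;z_⊖)`. Near `a = α(z_⊖)` the curve `F(x;z) = 0` is the graph of a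
continuous decreasing `ζ(x)` with `α(ζ(x)) = x`, so that the sign of `J(x;ζ(x))` is known on
either side of `a`, and continuity gives `J(a;z_⊖) = 0`. -/
lemma jAux_alpha_eq_zero {n m beta K zc C zo : ℝ} {alpha : ℝ → ℝ}
    (hn : 1 < n) (hm : m < 0) (hb1 : -1 < beta) (hb0 : beta < 0) (hK : 0 < K)
    (hzc : (n - 1) * (1 - m) * zc = -m * n * K) (hKc : K < zc) (hcc : C ≤ zc)
    (hkC : kap n m beta * C ^ (n - m) ≤ zc ^ (n - m))
    (halpha : ∀ z ∈ Ioo (0 : ℝ) C,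
      alpha z ∈ Ioo zc (zzero n K) ∧ Ffun n m beta K z (alpha z) = 0)
    (hzo1 : zo ∈ Ioo K C)
    (hzo2 : ∀ z ∈ Ioo (0 : ℝ) zo,
      0 < (alpha z - K) / psi n m beta z (alpha z) - (z - K) / z ^ n)
    (hzo3 : ∀ z ∈ Ioo zo C,
      (alpha z - K) / psi n m beta z (alpha z) - (z - K) / z ^ n < 0) :
    jAux n m K zo (alpha zo) = 0 := by
  have hb2 : beta < 1 := by linarith
  have hp : 0 < n - m := by linarith
  have hzc0 : 0 < zc := hK.trans hKc
  have hzo0 : 0 < zo := hK.trans hzo1.1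
  have hC0 : 0 < C := hzo0.trans hzo1.2
  have hk : 0 < kap n m beta := by
    have h1 : 0 < n * (1 - beta) := mul_pos (by linarith) (by linarith)
    have h2 : 0 < -m * (1 + beta) := mul_pos (by linarith) (by linarith)
    have h3 : 0 < n * -beta := mul_pos (by linarith) (by linarith)
    exact div_pos (by linarith) (by linarith)
  have hgpos : ∀ x, zc < x → 0 < gAux n m K x := by
    intro x hx
    have hx0 := hzc0.trans hx
    have h1 : 0 < (1 - m) * x + m * K := by
      have := mul_pos (by linarith : 0 < 1 - m) (sub_pos.2 (hKc.trans hx))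
      linarith
    unfold gAux; positivity
  have hqF : ∀ z x, 0 < x → Ffun n m beta K z x = 0 →
      qAux n m K (kap n m beta * z ^ (n - m)) x = 0 := by
    intro z x hx hF
    rw [Ffun_eq hn hm hb1 hb2 hx] at hF
    have := Acoef_pos hn hm hb1 hb2
    rcases mul_eq_zero.1 hF with h | h
    · exact absurd h (by positivity)
    · exact h
  have hkz : ∀ z, 0 < z → z < C → kap n m beta * z ^ (n - m) < zc ^ (n - m) := by
    intro z hz hzC
    exact (mul_lt_mul_of_pos_left (Real.rpow_lt_rpow hz.le hzC hp) hk).trans_le hkC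
  set a := alpha zo with ha
  obtain ⟨⟨hac, haz⟩, haF⟩ := halpha zo ⟨hzo0, hzo1.2⟩
  rw [← ha] at hac haz haF
  have ha0 : 0 < a := hzc0.trans hac
  set R : ℝ → ℝ := fun x => -hAux n m K x / gAux n m K x with hR
  have hRq : ∀ x, zc < x → qAux n m K (R x) x = 0 := by
    intro x hx
    have := (hgpos x hx).ne'
    simp only [hR, qAux]; field_simp; ring
  have hRa : R a = kap n m beta * zo ^ (n - m) := by
    have h := hqF zo a ha0 haF
    have := (hgpos a hac).ne'
    simp only [hR, qAux] at h ⊢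
    rw [div_eq_iff this]; linarith
  set ζ : ℝ → ℝ := fun x => (R x / kap n m beta) ^ (1 / (n - m)) with hζ
  have hζp : ∀ y, 0 < R y → kap n m beta * ζ y ^ (n - m) = R y := by
    intro y hy
    have : ζ y ^ (n - m) = R y / kap n m beta := by
      simp only [hζ]
      rw [← Real.rpow_mul (by positivity), one_div_mul_cancel hp.ne', Real.rpow_one]
    rw [this]; field_simp
  have hRa0 : 0 < R a := by rw [hRa]; positivity
  have hζa : ζ a = zo := by
    simp only [hζ]
    rw [hRa, mul_div_cancel_left₀ _ hk.ne', ← Real.rpow_mul hzo0.le,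
      mul_one_div_cancel hp.ne', Real.rpow_one]
  have hRc : ContinuousAt R a := by
    have c1 : ContinuousAt (fun x : ℝ => x ^ (-m)) a := continuousAt_id.rpow_const (Or.inl ha0.ne')
    have c2 : ContinuousAt (fun x : ℝ => x ^ (-n)) a := continuousAt_id.rpow_const (Or.inl ha0.ne')
    refine ContinuousAt.div ?_ ?_ (hgpos a hac).ne'
    · unfold hAux; fun_prop
    · unfold gAux; fun_prop
  have hζc : ContinuousAt ζ a :=
    (hRc.div_const _).rpow_const (Or.inr (by positivity))
  have hjc : Tendsto (fun x => jAux n m K (ζ x) x) (𝓝 a) (𝓝 (jAux n m K zo a)) := by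
    have h1 : Tendsto (fun x => (ζ x, x)) (𝓝 a) (𝓝 (zo, a)) := by
      have := hζc.tendsto
      rw [hζa] at this
      exact this.prodMk_nhds tendsto_id
    exact (jAux_continuousAt (K := K) (z := zo) hn hm ha0).tendsto.comp h1
  have hev : ∀ᶠ x in 𝓝 a, zc < x ∧ x < zzero n K ∧ 0 < R x ∧ R x < zc ^ (n - m) ∧ ζ x < C := by
    have hRlt : R a < zc ^ (n - m) := by rw [hRa]; exact hkz zo hzo0 hzo1.2
    have hζlt : ζ a < C := by rw [hζa]; exact hzo1.2
    filter_upwards [lt_mem_nhds hac, gt_mem_nhds haz, hRc.eventually (lt_mem_nhds hRa0),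
      hRc.eventually (gt_mem_nhds hRlt), hζc.eventually (gt_mem_nhds hζlt)] with x h1 h2 h3 h4 h5
    exact ⟨h1, h2, h3, h4, h5⟩
  have hmain : ∀ x, zc < x ∧ x < zzero n K ∧ 0 < R x ∧ R x < zc ^ (n - m) ∧ ζ x < C →
      (x < a → jAux n m K (ζ x) x < 0) ∧ (a < x → 0 < jAux n m K (ζ x) x) := by
    rintro x ⟨hxc, hxz, hRx, hRx', hζx⟩
    have hx0 := hzc0.trans hxc
    have hζ0 : 0 < ζ x := by simp only [hζ]; positivity
    have hαx : alpha (ζ x) = x := by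
      obtain ⟨⟨h1, -⟩, h2⟩ := halpha (ζ x) ⟨hζ0, hζx⟩
      have h3 := hqF _ _ (hzc0.trans h1) h2
      rw [hζp x hRx] at h3
      exact (qAux_strictMonoOn hn hm hzc0 hzc hRx'.le).injOn h1.le hxc.le (h3.trans (hRq x hxc).symm)
    obtain ⟨-, hFx⟩ := halpha (ζ x) ⟨hζ0, hζx⟩
    rw [hαx] at hFx
    obtain ⟨t, ht, hj⟩ := exists_jAux_eq_mul hn hm hb1 hb2 hζ0 ((hζx.trans_le hcc).trans hxc)
      (hKc.trans hxc) (hgpos x hxc) hFx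
    have hRζ : ∀ u v : ℝ, zc < u → zc < v → 0 < R v → R u < zc ^ (n - m) → u < v → ζ v < ζ u := by
      intro u v hu hv hv0 hu' huv
      have h1 := qAux_strictMonoOn hn hm hzc0 hzc hu'.le hu.le hv.le huv
      rw [hRq u hu, ← hRq v hv] at h1
      unfold qAux at h1
      have h2 : R v < R u := lt_of_mul_lt_mul_right (by linarith) (hgpos v hv).le
      exact Real.rpow_lt_rpow (by positivity) (by gcongr) (by positivity)
    constructor
    · intro hxa
      have hlt := hRζ x a hxc hac hRa0 hRx' hxa
      rw [hζa] at hlt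
      have hD := hzo3 (ζ x) ⟨hlt, hζx⟩
      rw [hαx] at hD
      rw [hj]; exact mul_neg_of_pos_of_neg ht hD
    · intro hxa
      have hlt := hRζ a x hac hxc hRx (by rw [hRa]; exact hkz zo hzo0 hzo1.2) hxa
      rw [hζa] at hlt
      have hD := hzo2 (ζ x) ⟨hζ0, hlt⟩
      rw [hαx] at hD
      rw [hj]; exact mul_pos ht hD
  apply le_antisymm
  · refine le_of_tendsto (hjc.mono_left (nhdsWithin_le_nhds (s := Iio a))) ?_
    filter_upwards [nhdsWithin_le_nhds hev, self_mem_nhdsWithin] with x hx hxa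
    exact ((hmain x hx).1 hxa).le
  · refine ge_of_tendsto (hjc.mono_left (nhdsWithin_le_nhds (s := Ioi a))) ?_
    filter_upwards [nhdsWithin_le_nhds hev, self_mem_nhdsWithin] with x hx hxa
    exact ((hmain x hx).2 hxa).le

/-! ### Existence, monotonicity and limits of `ξ` -/

set_option maxHeartbeats 1000000 in
theorem stmt_17 (sigma b r K beta n m : ℝ)
    (hsigma : sigma ≠ 0) (hr : 0 < r) (hbr : b < r) (hK : 0 < K)
    (hb1 : -1 < beta) (hb2 : beta < 1) (hbne : beta ≠ 0)
    (hm : m < 0) (hn : 0 < n)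
    (hmroot : 1 / 2 * sigma ^ 2 * m ^ 2 + (b - 1 / 2 * sigma ^ 2) * m - r = 0)
    (hnroot : 1 / 2 * sigma ^ 2 * n ^ 2 + (b - 1 / 2 * sigma ^ 2) * n - r = 0)
    (hb : 0 < b)
    (hconv : (n - 1) * (1 - beta) - 2 * m * beta < 0)
    (alpha : ℝ → ℝ)
    (halpha : ∀ z ∈ Set.Ioo (0 : ℝ) (gothC n m beta * zcrit r b K),
      alpha z ∈ Set.Ioo (zcrit r b K) (zzero n K) ∧ Ffun n m beta K z (alpha z) = 0)
    (zo : ℝ)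
    (hzo1 : zo ∈ Set.Ioo K (gothC n m beta * zcrit r b K))
    (hzo2 : ∀ z ∈ Set.Ioo (0 : ℝ) zo,
      0 < (alpha z - K) / psi n m beta z (alpha z) - (z - K) / z ^ n)
    (hzo3 : ∀ z ∈ Set.Ioo zo (gothC n m beta * zcrit r b K),
      (alpha z - K) / psi n m beta z (alpha z) - (z - K) / z ^ n < 0) :
    ∃ xi : ℝ → ℝ,
      (∀ z ∈ Set.Ioo (0 : ℝ) (zcrit r b K),
        xi z ∈ Set.Ioo (zcrit r b K) (zzero n K) ∧
        Jfun n m beta K z (xi z) = 0 ∧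
        (∀ x ∈ Set.Ioi (zcrit r b K), Jfun n m beta K z x = 0 → x = xi z) ∧
        (∀ x ∈ Set.Ioo z (xi z), Jfun n m beta K z x < 0) ∧
        (∀ x, xi z < x → 0 < Jfun n m beta K z x)) ∧
      StrictAntiOn xi (Set.Ioo (0 : ℝ) (zcrit r b K)) ∧
      Tendsto xi (𝓝[>] (0 : ℝ)) (𝓝 (zzero n K)) ∧
      xi zo = alpha zo ∧
      Tendsto xi (𝓝[<] (zcrit r b K)) (𝓝 (zcrit r b K)) := by
  have hs2 : 0 < sigma ^ 2 := by positivity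
  have hnm : 0 < n - m := by linarith
  have hsum : 1 / 2 * sigma ^ 2 * (n + m - 1) = -b := by
    have : (n - m) * (1 / 2 * sigma ^ 2 * (n + m - 1) + b) = 0 := by
      linear_combination hnroot - hmroot
    rcases mul_eq_zero.1 this with h | h <;> linarith
  have hprod : 1 / 2 * sigma ^ 2 * (m * n) = -r := by
    linear_combination n * hsum - hnroot
  have hfac : 1 / 2 * sigma ^ 2 * ((n - 1) * (1 - m)) = r - b := by
    linear_combination hsum - hprod
  have hn1 : 1 < n := by
    have h1 : 0 < 1 / 2 * sigma ^ 2 * ((n - 1) * (1 - m)) := by rw [hfac]; linarith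
    have h2 : 0 < (n - 1) * (1 - m) := pos_of_mul_pos_right h1 (by positivity)
    linarith [pos_of_mul_pos_left h2 (by linarith)]
  have hnm1 : n + m < 1 := by
    by_contra! h
    have : 0 ≤ 1 / 2 * sigma ^ 2 * (n + m - 1) := mul_nonneg (by positivity) (by linarith)
    linarith
  have hrb : 0 < r - b := by linarith
  set zc := zcrit r b K with hzcdef
  have hzr : (r - b) * zc = r * K := by
    rw [hzcdef, zcrit]; field_simp
  have hzc : (n - 1) * (1 - m) * zc = -m * n * K := by
    have : 1 / 2 * sigma ^ 2 * ((n - 1) * (1 - m) * zc - -m * n * K) = 0 := by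
      linear_combination zc * hfac + hzr + K * hprod
    rcases mul_eq_zero.1 this with h | h
    · exact absurd h (by positivity)
    · linarith
  have hKc : K < zc := by
    have h1 : 0 < b * K := by positivity
    have : (r - b) * K < (r - b) * zc := by rw [hzr]; linarith
    exact lt_of_mul_lt_mul_left this hrb.le
  have hzc0 : 0 < zc := hK.trans hKc
  have hzcz : zc < zzero n K := by
    rw [zzero, lt_div_iff₀ (by linarith)]
    have h1 : 0 < n * K := by positivity
    have : (1 - m) * (zc * (n - 1)) < (1 - m) * (n * K) := by
      linarith
    exact lt_of_mul_lt_mul_left this (by linarith)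
  have hA := Acoef_pos hn1 hm hb1 hb2
  have hb0 : beta < 0 := by
    by_contra! h
    have h1 : 0 < (n - 1) * (1 - beta) := mul_pos (by linarith) (by linarith)
    have h2 : 0 ≤ -m * beta := mul_nonneg (by linarith) h
    linarith
  set D := n * (1 - beta) - m * (1 + beta) with hD
  have hDpos : 0 < D := by
    have h1 : 0 < n * (1 - beta) := mul_pos (by linarith) (by linarith)
    have h2 : 0 < -m * (1 + beta) := mul_pos (by linarith) (by linarith)
    linarith
  have hE : 2 * m * (m - 1) * beta < 0 :=
    mul_neg_of_pos_of_neg (mul_pos_of_neg_of_neg (by linarith) (by linarith)) hb0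
  set W := -((n - 1) * D) / (2 * m * (m - 1) * beta) with hW
  have hWpos : 0 < W := by
    have : 0 < (n - 1) * D := mul_pos (by linarith) hDpos
    exact div_pos_of_neg_of_neg (by linarith) hE
  have hW1 : W ≤ 1 := by
    rw [hW, div_le_one_of_neg hE]
    have h1 : D ≤ (1 - m) * (1 - beta) := by
      rw [hD]; linarith
    have h2 := mul_le_mul_of_nonneg_left h1 (by linarith : 0 ≤ n - 1)
    have h3 := mul_lt_mul_of_pos_left hconv (by linarith : 0 < 1 - m)
    linarith
  have hgC : gothC n m beta = W ^ ((1 : ℝ) / (n - m)) := rfl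
  have hgC0 : 0 < gothC n m beta := by rw [hgC]; positivity
  have hgCp : gothC n m beta ^ (n - m) = W := by
    rw [hgC, ← Real.rpow_mul hWpos.le, one_div_mul_cancel hnm.ne', Real.rpow_one]
  have hcc : gothC n m beta * zc ≤ zc := by
    have : gothC n m beta ≤ 1 := by
      rw [hgC]; exact Real.rpow_le_one hWpos.le hW1 (by positivity)
    nlinarith
  -- `κ 𝔠^{n-m} = n(n-1) / (m(m-1))`, which is less than `1` because `n + m < 1`.
  have hkC : kap n m beta * (gothC n m beta * zc) ^ (n - m) ≤ zc ^ (n - m) := by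
    rw [Real.mul_rpow hgC0.le hzc0.le, hgCp, ← mul_assoc]
    have h1 : kap n m beta * W = (n * (n - 1)) / (m * (m - 1)) := by
      have hm0 : m ≠ 0 := hm.ne
      have hm1 : m - 1 ≠ 0 := by linarith
      have hD0 : D ≠ 0 := hDpos.ne'
      rw [hW, kap, ← hD]
      field_simp
    have h2 : 0 < m * (m - 1) := mul_pos_of_neg_of_neg hm (by linarith)
    have h3 : kap n m beta * W ≤ 1 := by
      rw [h1, div_le_one h2]
      have := mul_pos hnm (sub_pos.2 hnm1)
      linarith
    have h4 : 0 < zc ^ (n - m) := by positivity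
    nlinarith
  have hex : ∀ z, ∃ x, z ∈ Ioo 0 zc → x ∈ Ioo zc (zzero n K) ∧ jAux n m K z x = 0 := by
    intro z
    by_cases hz : z ∈ Ioo 0 zc
    · obtain ⟨x, hx, h0⟩ := exists_jAux_zero hn1 hm hK hz.1 hz.2 hzc hzcz
      exact ⟨x, fun _ => ⟨hx, h0⟩⟩
    · exact ⟨0, fun h => absurd h hz⟩
  choose xi hxi using hex
  have hmono : ∀ z ∈ Ioo 0 zc, StrictMonoOn (jAux n m K z) (Ici zc) :=
    fun z hz => jAux_strictMonoOn hn1 hm hz.1 hz.2.le hzc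
  have huniq : ∀ z ∈ Ioo 0 zc, ∀ x, zc < x → jAux n m K z x = 0 → x = xi z := by
    intro z hz x hx h0
    obtain ⟨h1, h2⟩ := hxi z hz
    exact (hmono z hz).injOn hx.le h1.1.le (h0.trans h2.symm)
  have hlt_iff : ∀ z ∈ Ioo 0 zc, ∀ x, zc < x → (jAux n m K z x < 0 ↔ x < xi z) := by
    intro z hz x hx
    obtain ⟨h1, h2⟩ := hxi z hz
    rw [← h2]
    exact (hmono z hz).lt_iff_lt hx.le h1.1.le
  have hgt_iff : ∀ z ∈ Ioo 0 zc, ∀ x, zc < x → (0 < jAux n m K z x ↔ xi z < x) := by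
    intro z hz x hx
    obtain ⟨h1, h2⟩ := hxi z hz
    rw [← h2]
    exact (hmono z hz).lt_iff_lt h1.1.le hx.le
  have hcont : ∀ x, 0 < x → Continuous (fun z => jAux n m K z x) := by
    intro x hx
    refine continuous_iff_continuousAt.2 fun z => ?_
    exact (jAux_continuousAt (K := K) (z := z) hn1 hm hx).comp
      (f := fun z : ℝ => (z, x)) (by fun_prop)
  refine ⟨xi, ?_, ?_, ?_, ?_, ?_⟩
  · intro z hz
    obtain ⟨h1, h2⟩ := hxi z hz
    refine ⟨h1, by rw [Jfun_eq, h2, mul_zero], ?_, ?_, ?_⟩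
    · intro x hx h0
      rw [Jfun_eq] at h0
      exact huniq z hz x hx ((mul_eq_zero.1 h0).resolve_left hA.ne')
    · intro x hx
      rw [Jfun_eq]
      refine mul_neg_of_pos_of_neg hA ?_
      rcases le_or_gt x zc with h | h
      · exact jAux_neg hn1 hm hz.1 hzc hx.1 h
      · exact (hlt_iff z hz x h).2 hx.2
    · intro x hx
      rw [Jfun_eq]
      exact mul_pos hA ((hgt_iff z hz x (h1.1.trans hx)).2 hx)
  · intro z₁ hz₁ z₂ hz₂ h12
    obtain ⟨h1, h2⟩ := hxi z₁ hz₁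
    exact (hgt_iff z₂ hz₂ _ h1.1).1
      (jAux_pos_of_lt hn1 hm hz₁.1 h12 hz₂.2.le hzc h1.1 h2)
  · have hIoo : ∀ᶠ z in 𝓝[>] (0 : ℝ), z ∈ Ioo 0 zc := Ioo_mem_nhdsGT hzc0
    refine tendsto_order.2 ⟨fun y hy => ?_, fun y hy => ?_⟩
    · obtain ⟨x, hx1, hx2⟩ := exists_between (max_lt hy hzcz)
      have hxc : zc < x := (le_max_right _ _).trans_lt hx1
      have hx0 := hzc0.trans hxc
      -- `z^{n-m}` and `z^{-m}` vanish at `z = 0`, so that `J(x;0) / A = h(x)`.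
      have h0 : jAux n m K 0 x < 0 := by
        unfold jAux qAux
        rw [Real.zero_rpow hnm.ne', Real.zero_rpow (by linarith : -m ≠ 0)]
        have : (n - 1) * x - n * K < 0 := by
          rw [zzero, lt_div_iff₀ (by linarith)] at hx2; linarith
        have h3 : hAux n m K x < 0 := mul_neg_of_neg_of_pos this (by positivity)
        linarith
      have hev := ((hcont x hx0).tendsto 0).eventually (gt_mem_nhds h0)
      filter_upwards [nhdsWithin_le_nhds hev, hIoo] with z hz hz'
      exact ((le_max_left _ _).trans_lt hx1).trans ((hlt_iff z hz' x hxc).1 hz)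
    · filter_upwards [hIoo] with z hz
      exact (hxi z hz).1.2.trans hy
  · have hzo : zo ∈ Ioo 0 zc := ⟨hK.trans hzo1.1, hzo1.2.trans_le hcc⟩
    refine (huniq zo hzo _ (halpha zo ⟨hzo.1, hzo1.2⟩).1.1 ?_).symm
    exact jAux_alpha_eq_zero hn1 hm hb1 hb0 hK hzc hKc hcc hkC halpha hzo1 hzo2 hzo3
  · have hIoo : ∀ᶠ z in 𝓝[<] zc, z ∈ Ioo 0 zc := Ioo_mem_nhdsLT hzc0
    refine tendsto_order.2 ⟨fun y hy => ?_, fun y hy => ?_⟩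
    · filter_upwards [hIoo] with z hz
      exact hy.trans (hxi z hz).1.1
    · have h0 : 0 < jAux n m K zc y := by
        rw [jAux_eq hzc0]
        exact sub_pos.2 (qAux_strictMonoOn hn1 hm hzc0 hzc le_rfl self_mem_Ici hy.le hy)
      have hev := ((hcont y (hzc0.trans hy)).tendsto zc).eventually (lt_mem_nhds h0)
      filter_upwards [nhdsWithin_le_nhds hev, hIoo] with z hz hz'
      exact (hgt_iff z hz' y hy).1 hz
end
end

section
/- Fix z > 𝔷_0. For each x ∈ [𝔷_0, z) there exists a unique point L(x;z) > z such that G(x, L(x;z); z) = 0; moreover G(x, y; z) < 0 for all y with x < y < L(x;z) and G(x, y; z) > 0 for all y > L(x;z). The function x ↦ L(x;z) is strictly decreasing on (𝔷_0, z) and L(x;z) → z as x → z. -/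
open Set Filter Topology

noncomputable section

/-!
The function `G(x, y; z)` is a difference `g(y) - g(x)`, where `g` is `gaux` below. With
`c(y) = (n - 1)(1 - m) y + m n K`, its derivative factors as
`g'(y) = ((z / y) ^ m - (z / y) ^ n) * c(y) / y` (`hasDerivAt_gaux`).

For `y ≥ 𝔷_0 = nK/(n-1)` one has `c(y) > 0`, so `g'` has the sign of `y - z`: `g` strictly decreases
on `[𝔷_0, z]`, strictly increases on `[z, ∞)`, and tends to `∞`. All the claims follow from this
shape alone (`exists_reflection`): `L(x)` is the point to the right of the minimum `z` at which `g`
takes the value `g(x)`.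
-/

/-- A continuous function that strictly decreases on `[a, z]`, then strictly increases to `∞` on
`[z, ∞)`, pairs every point left of its minimum with a unique point of equal value on the right. -/
lemma exists_reflection {g : ℝ → ℝ} {a z : ℝ} (haz : a < z)
    (hanti : StrictAntiOn g (Icc a z)) (hmono : StrictMonoOn g (Ici z))
    (hcont : ContinuousOn g (Ici a)) (htop : Tendsto g atTop atTop) :
    ∃ L : ℝ → ℝ,
      (∀ x ∈ Ico a z, z < L x ∧ g (L x) = g x ∧ (∀ y, z < y → g y = g x → y = L x) ∧
        (∀ y, x < y → y < L x → g y < g x) ∧ (∀ y, L x < y → g x < g y)) ∧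
      StrictAntiOn L (Ioo a z) ∧ Tendsto L (𝓝[<] z) (𝓝 z) := by
  have hex : ∀ x, ∃ l, x ∈ Ico a z → z < l ∧ g l = g x := by
    intro x
    by_cases hx : x ∈ Ico a z
    swap
    · exact ⟨0, fun h => absurd h hx⟩
    obtain ⟨Y, hY, hzY⟩ := ((htop.eventually_gt_atTop (g x)).and (eventually_gt_atTop z)).exists
    have hzx : g z < g x := hanti ⟨hx.1, hx.2.le⟩ ⟨haz.le, le_rfl⟩ hx.2
    obtain ⟨l, hl, hgl⟩ := intermediate_value_Ioo hzY.le
      (hcont.mono fun t ht => haz.le.trans ht.1) ⟨hzx, hY⟩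
    exact ⟨l, fun _ => ⟨hl.1, hgl⟩⟩
  choose L hL using hex
  refine ⟨L, ?_, ?_, ?_⟩
  · intro x hx
    obtain ⟨h1, h2⟩ := hL x hx
    refine ⟨h1, h2, ?_, ?_, ?_⟩
    · intro y hy hgy
      exact hmono.injOn hy.le h1.le (hgy.trans h2.symm)
    · intro y hxy hyL
      rcases le_or_gt y z with hyz | hyz
      · exact hanti ⟨hx.1, hx.2.le⟩ ⟨hx.1.trans hxy.le, hyz⟩ hxy
      · exact h2 ▸ hmono hyz.le h1.le hyL
    · intro y hy
      exact h2 ▸ hmono h1.le (h1.trans hy).le hy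
  · intro x hx y hy hxy
    obtain ⟨h1, h2⟩ := hL x ⟨hx.1.le, hx.2⟩
    obtain ⟨h3, h4⟩ := hL y ⟨hy.1.le, hy.2⟩
    rw [← hmono.lt_iff_lt h3.le h1.le, h2, h4]
    exact hanti ⟨hx.1.le, hx.2.le⟩ ⟨hy.1.le, hy.2.le⟩ hxy
  · have hIoo : ∀ᶠ x in 𝓝[<] z, x ∈ Ioo a z := Ioo_mem_nhdsLT haz
    have hgz : Tendsto g (𝓝[<] z) (𝓝 (g z)) :=
      ((hcont.continuousAt (Ici_mem_nhds haz)).tendsto).mono_left nhdsWithin_le_nhds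
    rw [tendsto_order]
    constructor
    · intro u hu
      filter_upwards [hIoo] with x hx
      exact hu.trans (hL x ⟨hx.1.le, hx.2⟩).1
    · intro u hu
      -- `g x → g z < g u`, so `g (L x) = g x` eventually drops below `g u`.
      filter_upwards [hIoo, hgz.eventually_lt_const (hmono self_mem_Ici hu.le hu)]
        with x hx hgx
      obtain ⟨h1, h2⟩ := hL x ⟨hx.1.le, hx.2⟩
      rwa [← hmono.lt_iff_lt h1.le hu.le, h2]

/-- The function `g` for which `G(x, y; z) = g(y) - g(x)`. -/
def gaux (n m K z y : ℝ) : ℝ :=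
  ((n - 1) * y - n * K) * z ^ m * y ^ (-m) - ((m - 1) * y - m * K) * z ^ n * y ^ (-n)

lemma Gfun_eq (n m K z x y : ℝ) : Gfun n m K z x y = gaux n m K z y - gaux n m K z x := by
  unfold Gfun gaux; ring

/-- The two powers contribute the same affine factor to the derivative, because
`(n - 1)(1 - m) = (m - 1)(1 - n)`. -/
lemma hasDerivAt_gaux (n m K z : ℝ) {y : ℝ} (hy : 0 < y) :
    HasDerivAt (gaux n m K z)
      ((z ^ m * y ^ (-m) - z ^ n * y ^ (-n)) * (((n - 1) * (1 - m) * y + m * n * K) / y)) y := by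
  have hp : ∀ k : ℝ, HasDerivAt (fun t : ℝ => t ^ (-k)) (-k * (y ^ (-k) / y)) y := by
    intro k
    have h := Real.hasDerivAt_rpow_const (x := y) (p := -k) (Or.inl hy.ne')
    rwa [Real.rpow_sub_one hy.ne'] at h
  have ha : ∀ p q : ℝ, HasDerivAt (fun t : ℝ => p * t - q) p y := by
    intro p q
    simpa using ((hasDerivAt_id y).const_mul p).sub_const q
  have h := (((ha (n - 1) (n * K)).mul_const (z ^ m)).mul (hp m)).sub
    (((ha (m - 1) (m * K)).mul_const (z ^ n)).mul (hp n))
  refine h.congr_deriv ?_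
  field_simp
  ring

lemma rpow_mul_rpow_neg {z y : ℝ} (hz : 0 < z) (hy : 0 < y) (k : ℝ) :
    z ^ k * y ^ (-k) = (z / y) ^ k := by
  rw [Real.div_rpow hz.le hy.le, Real.rpow_neg hy.le, div_eq_mul_inv]

/-- The hypothesis `b < r` makes the quadratic negative at `1`, and it is negative at `0`, so by
convexity its positive root lies beyond `1`. -/
lemma one_lt_root {sigma b r n : ℝ} (hr : 0 < r) (hbr : b < r) (hn : 0 < n)
    (hroot : 1 / 2 * sigma ^ 2 * n ^ 2 + (b - 1 / 2 * sigma ^ 2) * n - r = 0) : 1 < n := by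
  by_contra! h
  have h1 : 0 ≤ sigma ^ 2 * (n * (1 - n)) :=
    mul_nonneg (sq_nonneg _) (mul_nonneg hn.le (by linarith))
  have h2 : 0 < n * (r - b) := mul_pos hn (by linarith)
  have h3 : 0 ≤ (1 - n) * r := mul_nonneg (by linarith) hr.le
  linarith

section

variable {n m K : ℝ}

lemma K_lt_zzero (hn : 1 < n) (hK : 0 < K) : K < zzero n K := by
  unfold zzero
  rw [lt_div_iff₀ (by linarith)]
  linarith

/-- Positivity of the affine factor of `g'`: its zero is `𝔷_c`, which lies to the left of `𝔷_0`. -/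
lemma affine_pos (hn : 1 < n) (hm : m < 0) (hK : 0 < K) {y : ℝ} (hy : zzero n K ≤ y) :
    0 < (n - 1) * (1 - m) * y + m * n * K := by
  have h : n * K ≤ y * (n - 1) := by
    unfold zzero at hy
    rwa [div_le_iff₀ (by linarith)] at hy
  have h1 : (1 - m) * (n * K) ≤ (1 - m) * (y * (n - 1)) :=
    mul_le_mul_of_nonneg_left h (by linarith)
  have h2 : 0 < n * K := by positivity
  linarith

lemma continuousOn_gaux (hn : 1 < n) (hK : 0 < K) (z : ℝ) :
    ContinuousOn (gaux n m K z) (Ici (zzero n K)) := fun _ hy =>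
  (hasDerivAt_gaux n m K z
    ((hK.trans (K_lt_zzero hn hK)).trans_le hy)).continuousAt.continuousWithinAt

lemma strictAntiOn_gaux (hn : 1 < n) (hm : m < 0) (hK : 0 < K) (z : ℝ) :
    StrictAntiOn (gaux n m K z) (Icc (zzero n K) z) := by
  refine strictAntiOn_of_deriv_neg (convex_Icc _ _)
    ((continuousOn_gaux hn hK z).mono Icc_subset_Ici_self) ?_
  intro y hy
  rw [interior_Icc] at hy
  have hy0 : 0 < y := (hK.trans (K_lt_zzero hn hK)).trans hy.1
  have hz0 : 0 < z := hy0.trans hy.2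
  rw [(hasDerivAt_gaux n m K z hy0).deriv, rpow_mul_rpow_neg hz0 hy0, rpow_mul_rpow_neg hz0 hy0]
  exact mul_neg_of_neg_of_pos
    (sub_neg.2 (Real.rpow_lt_rpow_of_exponent_lt ((one_lt_div hy0).2 hy.2) (by linarith)))
    (div_pos (affine_pos hn hm hK hy.1.le) hy0)

lemma strictMonoOn_gaux (hn : 1 < n) (hm : m < 0) (hK : 0 < K) {z : ℝ} (hz : zzero n K < z) :
    StrictMonoOn (gaux n m K z) (Ici z) := by
  refine strictMonoOn_of_deriv_pos (convex_Ici _)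
    ((continuousOn_gaux hn hK z).mono (Ici_subset_Ici.2 hz.le)) ?_
  intro y hy
  rw [interior_Ici] at hy
  have hz0 : 0 < z := (hK.trans (K_lt_zzero hn hK)).trans hz
  have hy0 : 0 < y := hz0.trans hy
  rw [(hasDerivAt_gaux n m K z hy0).deriv, rpow_mul_rpow_neg hz0 hy0, rpow_mul_rpow_neg hz0 hy0]
  exact mul_pos
    (sub_pos.2 (Real.rpow_lt_rpow_of_exponent_gt (div_pos hz0 hy0) ((div_lt_one hy0).2 hy)
      (by linarith)))
    (div_pos (affine_pos hn hm hK (hz.trans hy).le) hy0)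

/-- For `y > K` the `y ^ (-n)` part of `g` is nonnegative, so `g` dominates its
`y ^ (-m)` part. -/
lemma tendsto_gaux_atTop (hn : 1 < n) (hm : m < 0) (hK : 0 < K) {z : ℝ} (hz : 0 < z) :
    Tendsto (gaux n m K z) atTop atTop := by
  have h1 : Tendsto (fun y : ℝ => (n - 1) * y - n * K) atTop atTop :=
    tendsto_atTop_add_const_right _ _ (tendsto_id.const_mul_atTop (by linarith))
  have h2 : Tendsto (fun y : ℝ => y ^ (-m)) atTop atTop := tendsto_rpow_atTop (by linarith)
  refine tendsto_atTop_mono' _ ?_ ((h1.atTop_mul_const (Real.rpow_pos_of_pos hz m)).atTop_mul_atTop₀ h2)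
  filter_upwards [eventually_gt_atTop K] with y hy
  have hy0 : 0 < y := hK.trans hy
  have h3 : (m - 1) * y - m * K ≤ 0 := by
    have : 0 < (-m) * (y - K) := mul_pos (by linarith) (by linarith)
    linarith
  have h4 : ((m - 1) * y - m * K) * z ^ n * y ^ (-n) ≤ 0 :=
    mul_nonpos_of_nonpos_of_nonneg
      (mul_nonpos_of_nonpos_of_nonneg h3 (Real.rpow_nonneg hz.le _)) (Real.rpow_nonneg hy0.le _)
  unfold gaux
  linarith

end

theorem stmt_19 (sigma b r K z n m : ℝ)
    (hsigma : sigma ≠ 0) (hr : 0 < r) (hbr : b < r) (hK : 0 < K)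
    (hm : m < 0) (hn : 0 < n)
    (hmroot : 1 / 2 * sigma ^ 2 * m ^ 2 + (b - 1 / 2 * sigma ^ 2) * m - r = 0)
    (hnroot : 1 / 2 * sigma ^ 2 * n ^ 2 + (b - 1 / 2 * sigma ^ 2) * n - r = 0)
    (hzgt : zzero n K < z) :
    ∃ L : ℝ → ℝ,
      (∀ x ∈ Set.Ico (zzero n K) z,
        z < L x ∧
        Gfun n m K z x (L x) = 0 ∧
        (∀ y, z < y → Gfun n m K z x y = 0 → y = L x) ∧
        (∀ y, x < y → y < L x → Gfun n m K z x y < 0) ∧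
        (∀ y, L x < y → 0 < Gfun n m K z x y)) ∧
      StrictAntiOn L (Set.Ioo (zzero n K) z) ∧
      Tendsto L (𝓝[<] z) (𝓝 z) := by
  have hn1 : 1 < n := one_lt_root hr hbr hn hnroot
  have hz : 0 < z := (hK.trans (K_lt_zzero hn1 hK)).trans hzgt
  simp only [Gfun_eq, sub_eq_zero, sub_neg, sub_pos]
  exact exists_reflection hzgt (strictAntiOn_gaux hn1 hm hK z) (strictMonoOn_gaux hn1 hm hK hzgt)
    (continuousOn_gaux hn1 hK z) (tendsto_gaux_atTop hn1 hm hK hz)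
end
end
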